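/- arXiv:2402.12313 — 2 statements merged into one kernel-verified Lean document; each statement's English description precedes it below -/
import Mathlib

section
/- Let G be an X-generated group and let S be an E-unitary inverse monoid equipped with a map ι_S : X → S such that S is generated by ι_S(X) under multiplication and inversion, and assume that whenever two words u, v over X ∪ X⁻¹ satisfy [u]_G = [v]_G, the values [u]_S and [v]_S are σ-related in S. Then there exists a monoid homomorphism φ : M(G,X) → S such that φ(s⁻¹) = φ(s)⁻¹ for all s ∈ M(G,X), φ(Γ_x, [x]_G) = ι_S(x) for all x ∈ X, and for every (A,g) ∈ M(G,X) and every word w over X ∪ X⁻¹ with [w]_G = g, φ(A,g) is σ-related to [w]_S. -/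
namespace FInvPaper

/-- The extended alphabet `Y = X ⊔ Ḡ`, with `Ḡ` a bijective copy of `G`. -/
abbrev YT (X G : Type*) := X ⊕ G

/-- The extension `ι_Y : Y → G` of the assignment map `ι : X → G`. -/
def iotaY {X G : Type*} (ι : X → G) : YT X G → G := Sum.elim ι id

/-- A (candidate) subgraph of `Cay(G,Y)`: a set of vertices together with a set
of positive edges, an edge `(a, y)` joining `a` to `a * ι_Y y`. -/
abbrev Graph (X G : Type*) := Set G × Set (G × YT X G)

variable {X G : Type*} [Group G]

/-- `Γ` is a finite subgraph of `Cay(G,Y)` containing the origin. -/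
def IsSubgraph (ι : X → G) (Γ : Graph X G) : Prop :=
  Γ.1.Finite ∧ Γ.2.Finite ∧ (1 : G) ∈ Γ.1 ∧
    ∀ e ∈ Γ.2, e.1 ∈ Γ.1 ∧ e.1 * iotaY ι e.2 ∈ Γ.1

/-- The relation on vertices given by the positive edges of `Γ`. -/
def edgeRel (ι : X → G) (Γ : Graph X G) (a b : G) : Prop :=
  ∃ y : YT X G, (a, y) ∈ Γ.2 ∧ b = a * iotaY ι y

/-- `Γ` is connected: every vertex is related to the origin `1` by the
equivalence relation generated by the edge relation. -/
def IsConn (ι : X → G) (Γ : Graph X G) : Prop :=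
  ∀ v ∈ Γ.1, Relation.EqvGen (edgeRel ι Γ) 1 v

/-- `𝒳_Y`: all finite connected subgraphs of `Cay(G,Y)` containing the origin. -/
def XY (ι : X → G) : Set (Graph X G) :=
  {Γ | IsSubgraph ι Γ ∧ IsConn ι Γ}

/-- The translate `gΓ`. -/
def gmul (g : G) (Γ : Graph X G) : Graph X G :=
  ((g * ·) '' Γ.1, (fun e => (g * e.1, e.2)) '' Γ.2)

/-- Componentwise union of graphs. -/
def gunion (Γ Δ : Graph X G) : Graph X G := (Γ.1 ∪ Δ.1, Γ.2 ∪ Δ.2)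

/-- Componentwise inclusion of graphs. -/
def gsub (Γ Δ : Graph X G) : Prop := Γ.1 ⊆ Δ.1 ∧ Γ.2 ⊆ Δ.2

/-- The closure `Γ^∧` of `Γ`: add the edge `(a, \overline{a⁻¹b})` for all
vertices `a, b` of `Γ`. -/
def clo (Γ : Graph X G) : Graph X G :=
  (Γ.1, Γ.2 ∪ {e : G × YT X G | ∃ a ∈ Γ.1, ∃ b ∈ Γ.1, e = (a, Sum.inr (a⁻¹ * b))})

/-- `Γ` is closed. -/
def IsClosedGr (Γ : Graph X G) : Prop :=
  ∀ a ∈ Γ.1, ∀ b ∈ Γ.1, (a, (Sum.inr (a⁻¹ * b) : YT X G)) ∈ Γ.2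

/-- `𝒳_Y^∧`: all closed graphs in `𝒳_Y`. -/
def XYw (ι : X → G) : Set (Graph X G) := {Γ | Γ ∈ XY ι ∧ IsClosedGr Γ}

/-- The graph `Γ_1` with single vertex `1` and no edges. -/
def gammaOne : Graph X G := ({1}, ∅)

/-- The graph `Γ_x` for `x ∈ X`. -/
def gammaX (ι : X → G) (x : X) : Graph X G :=
  ({1, ι x}, {((1 : G), (Sum.inl x : YT X G))})

/-- The graph `Γ_ḡ` for `g ∈ G`. -/
def gammaBar (g : G) : Graph X G :=
  ({1, g}, {((1 : G), (Sum.inr g : YT X G))})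

/-- Raw elements: pairs `(Γ, g)`. -/
abbrev Elt (X G : Type*) := Graph X G × G

/-- The carrier of `M(G,Y)`. -/
def Mset (ι : X → G) : Set (Elt X G) := {p | p.1 ∈ XY ι ∧ p.2 ∈ p.1.1}

/-- Multiplication of `M(G,Y)`: `(A,g)(B,h) = (A ∪ gB, gh)`. -/
def mulM (p q : Elt X G) : Elt X G := (gunion p.1 (gmul p.2 q.1), p.2 * q.2)

/-- Inversion: `(A,g)⁻¹ = (g⁻¹A, g⁻¹)`. -/
def invM (p : Elt X G) : Elt X G := (gmul p.2⁻¹ p.1, p.2⁻¹)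

/-- The carrier of `M^∧(G,Y)`. -/
def Mwedge (ι : X → G) : Set (Elt X G) := {p | p.1 ∈ XYw ι ∧ p.2 ∈ p.1.1}

/-- Multiplication of `M^∧(G,Y)`: `(A,g)(B,h) = ((A ∪ gB)^∧, gh)`. -/
def mulW (p q : Elt X G) : Elt X G := (clo (gunion p.1 (gmul p.2 q.1)), p.2 * q.2)

/-- Natural partial order of `M^∧(G,Y)`: `s ≤ t` iff `s = s s⁻¹ t`. -/
def nleW (p q : Elt X G) : Prop := p = mulW (mulW p (invM p)) q

/-- Minimum group congruence `σ` of `M^∧(G,Y)`. -/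
def sigmaW (ι : X → G) (p q : Elt X G) : Prop :=
  ∃ u ∈ Mwedge ι, nleW u p ∧ nleW u q

/-- The `m`-operation of `M^∧(G,Y)`: `m(A, g) = (Γ_ḡ^∧, g)`. -/
def mW (p : Elt X G) : Elt X G := (clo (gammaBar p.2), p.2)

/-- Natural partial order of `M(G,Y)`. -/
def nleM (p q : Elt X G) : Prop := p = mulM (mulM p (invM p)) q

/-- Minimum group congruence `σ` of `M(G,Y)`. -/
def sigmaM (ι : X → G) (p q : Elt X G) : Prop :=
  ∃ u ∈ Mset ι, nleM u p ∧ nleM u q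

end FInvPaper
namespace FInvPaper

/-- A (candidate) subgraph of `Cay(G,X)`. -/
abbrev GraphX (X G : Type*) := Set G × Set (G × X)

variable {X G : Type*} [Group G]

/-- `Γ` is a finite subgraph of `Cay(G,X)` containing the origin. -/
def IsSubgraphX (ι : X → G) (Γ : GraphX X G) : Prop :=
  Γ.1.Finite ∧ Γ.2.Finite ∧ (1 : G) ∈ Γ.1 ∧
    ∀ e ∈ Γ.2, e.1 ∈ Γ.1 ∧ e.1 * ι e.2 ∈ Γ.1

/-- The edge relation of a subgraph of `Cay(G,X)`. -/
def edgeRelX (ι : X → G) (Γ : GraphX X G) (a b : G) : Prop :=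
  ∃ x : X, (a, x) ∈ Γ.2 ∧ b = a * ι x

/-- Connectedness of a subgraph of `Cay(G,X)`. -/
def IsConnX (ι : X → G) (Γ : GraphX X G) : Prop :=
  ∀ v ∈ Γ.1, Relation.EqvGen (edgeRelX ι Γ) 1 v

/-- `𝒳̃_X`: all finite (not necessarily connected) subgraphs of `Cay(G,X)`
containing the origin. -/
def tXX (ι : X → G) : Set (GraphX X G) := {Γ | IsSubgraphX ι Γ}

/-- The translate `gΓ` for subgraphs of `Cay(G,X)`. -/
def gmulX (g : G) (Γ : GraphX X G) : GraphX X G :=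
  ((g * ·) '' Γ.1, (fun e => (g * e.1, e.2)) '' Γ.2)

/-- Componentwise union. -/
def gunionX (Γ Δ : GraphX X G) : GraphX X G := (Γ.1 ∪ Δ.1, Γ.2 ∪ Δ.2)

/-- The carrier of `F(G,X)`. -/
def Fset (ι : X → G) : Set (GraphX X G × G) := {p | p.1 ∈ tXX ι ∧ p.2 ∈ p.1.1}

/-- Multiplication `(A,g)(B,h) = (A ∪ gB, gh)` (used both in `F(G,X)` and `M(G,X)`). -/
def mulMX (p q : GraphX X G × G) : GraphX X G × G :=
  (gunionX p.1 (gmulX p.2 q.1), p.2 * q.2)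

/-- Inversion `(A,g)⁻¹ = (g⁻¹A, g⁻¹)`. -/
def invMX (p : GraphX X G × G) : GraphX X G × G := (gmulX p.2⁻¹ p.1, p.2⁻¹)

/-- Erasing all edges with labels in `Ḡ`: the map `Γ ↦ Γ ∩ Cay(G,X)`. -/
def ff (Γ : Graph X G) : GraphX X G :=
  (Γ.1, {e : G × X | (e.1, (Sum.inl e.2 : YT X G)) ∈ Γ.2})

end FInvPaper
namespace FInvPaper

/-- An inverse monoid: a monoid with an involutive inversion such that
`s s⁻¹ s = s`, `(st)⁻¹ = t⁻¹ s⁻¹`, and idempotents commute. -/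
class InverseMonoid (S : Type*) extends Monoid S, Inv S where
  mul_inv_mul : ∀ s : S, s * s⁻¹ * s = s
  inv_inv : ∀ s : S, s⁻¹⁻¹ = s
  mul_inv_rev : ∀ s t : S, (s * t)⁻¹ = t⁻¹ * s⁻¹
  idem_comm : ∀ e f : S, e * e = e → f * f = f → e * f = f * e

/-- The natural partial order of an inverse monoid: `s ≤ t` iff `s = s s⁻¹ t`. -/
def nle {S : Type*} [InverseMonoid S] (s t : S) : Prop := s = s * s⁻¹ * t

/-- The minimum group congruence `σ`: `s σ t` iff some `u` lies below both. -/
def sigmaRel {S : Type*} [InverseMonoid S] (s t : S) : Prop :=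
  ∃ u : S, nle u s ∧ nle u t

/-- Words over `X ∪ X⁻¹`: lists of signed letters (`true` = positive letter). -/
abbrev Word (X : Type*) := List (X × Bool)

/-- The value of a word under `x ↦ f x`, `x⁻¹ ↦ inv (f x)`;
the empty word has value `1`. -/
def evalWord {X M : Type*} [One M] [Mul M] (f : X → M) (inv : M → M) : Word X → M
  | [] => 1
  | (x, b) :: w => (if b then f x else inv (f x)) * evalWord f inv w

end FInvPaper

namespace FInvPaper

variable {X G : Type*} [Group G]

/-- `𝒳_X`: all finite connected subgraphs of `Cay(G,X)` containing the origin. -/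
def XXc (ι : X → G) : Set (GraphX X G) := {Γ | IsSubgraphX ι Γ ∧ IsConnX ι Γ}

/-- The carrier of the Margolis–Meakin expansion `M(G,X)`. -/
def MsetX (ι : X → G) : Set (GraphX X G × G) := {p | p.1 ∈ XXc ι ∧ p.2 ∈ p.1.1}

/-- The graph `Γ_1` in `Cay(G,X)`. -/
def gammaOneX : GraphX X G := ({1}, ∅)

/-- The graph `Γ_x` in `Cay(G,X)`. -/
def gammaXX (ι : X → G) (x : X) : GraphX X G := ({1, ι x}, {((1 : G), x)})

/-
Write `[w]_G` and `[w]_S` for the two values of a word `w`, and `Γ(w)` for the subgraph of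
`Cay(G,X)` traced by the path from `1` labelled `w`.  Then `w ↦ (Γ(w), [w]_G)` turns concatenation
and formal inversion into the operations of `M(G,X)`, and it is onto because a finite connected
graph is traced by a closed path.  So `φ(Γ(w), [w]_G) = [w]_S` defines the required map as soon as
`[w]_S` is determined by `Γ(w)` and `[w]_G`.

View elements of `S` as partial bijections composed from left to right.  For an idempotent `e` call
an edge `(a, x)` supported by `e` if some `v` with `[v]_G = a` is such that `[vx]_S` is defined on
`e`.  In an `E`-unitary monoid, `σ`-related elements defined on `e` agree on `e`, so the choice of
`v` is irrelevant, and hence `[u]_S` is defined on `e` exactly when all edges of `Γ(u)` are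
supported by `e`.  Thus the edges of `Γ(u)` determine the domain of `[u]_S`, and `[u]_G` then
determines `[u]_S` itself.
-/

namespace InverseMonoid

variable {S : Type*} [InverseMonoid S]

theorem isIdempotentElem_mul_inv (s : S) : IsIdempotentElem (s * s⁻¹) := by
  rw [IsIdempotentElem, ← mul_assoc, mul_inv_mul]

theorem isIdempotentElem_inv_mul (s : S) : IsIdempotentElem (s⁻¹ * s) := by
  simpa only [InverseMonoid.inv_inv] using isIdempotentElem_mul_inv s⁻¹

theorem commute_of_isIdempotentElem {e f : S} (he : IsIdempotentElem e)
    (hf : IsIdempotentElem f) : Commute e f :=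
  idem_comm e f he hf

theorem inv_eq_of_mul_eq_one {a b : S} (hab : a * b = 1) : a⁻¹ = b := by
  have hba : IsIdempotentElem (b * a) := by
    rw [IsIdempotentElem, mul_assoc b, ← mul_assoc a, hab, one_mul]
  calc a⁻¹ = (a⁻¹ * a) * (b * a) * b := by
        rw [mul_assoc, mul_assoc b, hab, mul_one, mul_assoc, hab, mul_one]
    _ = (b * a) * (a⁻¹ * a) * b := by
        rw [(commute_of_isIdempotentElem (isIdempotentElem_inv_mul a) hba).eq]
    _ = b * (a * a⁻¹ * a) * b := by simp only [mul_assoc]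
    _ = b := by rw [mul_inv_mul, mul_assoc, hab, mul_one]

scoped instance : DivisionMonoid S where
  inv_inv := InverseMonoid.inv_inv
  mul_inv_rev := InverseMonoid.mul_inv_rev
  inv_eq_of_mul _ _ := inv_eq_of_mul_eq_one

theorem inv_mul_inv (s : S) : s⁻¹ * s * s⁻¹ = s⁻¹ := by
  simpa only [_root_.inv_inv] using mul_inv_mul s⁻¹

theorem inv_eq_of_isIdempotentElem {e : S} (he : IsIdempotentElem e) : e⁻¹ = e := by
  have hinv : IsIdempotentElem e⁻¹ := by rw [IsIdempotentElem, ← mul_inv_rev, he.eq]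
  calc e⁻¹ = e⁻¹ * (e * e) * e⁻¹ := by rw [he.eq, inv_mul_inv]
    _ = (e⁻¹ * e) * (e * e⁻¹) := by simp only [mul_assoc]
    _ = (e * e⁻¹) * (e⁻¹ * e) :=
      commute_of_isIdempotentElem (isIdempotentElem_inv_mul e) (isIdempotentElem_mul_inv e)
    _ = e * (e⁻¹ * e⁻¹) * e := by simp only [mul_assoc]
    _ = e := by rw [hinv.eq, mul_inv_mul]

/-- For an idempotent `e`, this says `e ≤ s s⁻¹`: the partial bijection `s`, acting on the right,
is defined on all of `e`. -/
def DefinedOn (s e : S) : Prop := e * (s * s⁻¹) = e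

theorem definedOn_mul_inv (s : S) : DefinedOn s (s * s⁻¹) :=
  isIdempotentElem_mul_inv s

theorem definedOn_one (e : S) : DefinedOn 1 e := by
  rw [DefinedOn, inv_one, mul_one, mul_one]

theorem DefinedOn.of_mul {s t e : S} (h : DefinedOn (s * t) e) : DefinedOn s e := by
  have hst : s * t * (s * t)⁻¹ * (s * s⁻¹) = s * t * (s * t)⁻¹ := by
    calc s * t * (s * t)⁻¹ * (s * s⁻¹) = s * t * t⁻¹ * (s⁻¹ * s * s⁻¹) := by
          simp only [mul_inv_rev, mul_assoc]
      _ = s * t * (s * t)⁻¹ := by rw [inv_mul_inv, mul_inv_rev, mul_assoc (s * t)]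
  calc e * (s * s⁻¹) = e * (s * t * (s * t)⁻¹) * (s * s⁻¹) := by rw [h]
    _ = e := by rw [mul_assoc, hst, h]

theorem DefinedOn.mul_mul_inv_mul {s e : S} (h : DefinedOn s e) (t : S) :
    e * s * (s⁻¹ * t) = e * t := by
  calc e * s * (s⁻¹ * t) = e * (s * s⁻¹) * t := by simp only [mul_assoc]
    _ = e * t := by rw [h]

theorem definedOn_mul_mul_inv {s t e : S} :
    DefinedOn (s * t * t⁻¹) e ↔ DefinedOn (s * t) e := by
  have hdom : s * t * t⁻¹ * (s * t * t⁻¹)⁻¹ = s * t * (s * t)⁻¹ := by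
    calc s * t * t⁻¹ * (s * t * t⁻¹)⁻¹ = s * (t * t⁻¹ * t) * (t⁻¹ * s⁻¹) := by
          simp only [mul_inv_rev, _root_.inv_inv, mul_assoc]
      _ = s * t * (s * t)⁻¹ := by rw [mul_inv_mul, mul_inv_rev]
  rw [DefinedOn, DefinedOn, hdom]

theorem definedOn_iff_mul_mul_inv_eq {s e : S} (he : IsIdempotentElem e) :
    DefinedOn s e ↔ e * s * (e * s)⁻¹ = e := by
  have hdom : e * s * (e * s)⁻¹ = e * (s * s⁻¹) := by
    calc e * s * (e * s)⁻¹ = e * ((s * s⁻¹) * e) := by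
          rw [mul_inv_rev, inv_eq_of_isIdempotentElem he]; simp only [mul_assoc]
      _ = e * (s * s⁻¹) := by
          rw [(commute_of_isIdempotentElem (isIdempotentElem_mul_inv s) he).eq, ← mul_assoc, he.eq]
  rw [DefinedOn, hdom]

theorem definedOn_congr {s t e : S} (he : IsIdempotentElem e) (hst : e * s = e * t) :
    DefinedOn s e ↔ DefinedOn t e := by
  rw [definedOn_iff_mul_mul_inv_eq he, definedOn_iff_mul_mul_inv_eq he, hst]

theorem mul_inv_mul_of_nle {s u : S} (h : nle u s) : s * s⁻¹ * u = u := by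
  have hcomm : Commute (s * s⁻¹) (u * u⁻¹) :=
    commute_of_isIdempotentElem (isIdempotentElem_mul_inv s) (isIdempotentElem_mul_inv u)
  calc s * s⁻¹ * u = (s * s⁻¹) * (u * u⁻¹) * s := by rw [mul_assoc (s * s⁻¹), ← h]
    _ = u * u⁻¹ * (s * s⁻¹ * s) := by rw [hcomm.eq, mul_assoc]
    _ = u := by rw [mul_inv_mul, ← h]

/-- `S` is `E`-unitary: only idempotents lie above idempotents. -/
def IsEUnitary (S : Type*) [InverseMonoid S] : Prop :=
  ∀ e s : S, e * e = e → nle e s → s * s = s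

theorem IsEUnitary.isIdempotentElem_inv_mul (hS : IsEUnitary S) {s t : S} (hst : sigmaRel s t) :
    IsIdempotentElem (s⁻¹ * t) := by
  obtain ⟨u, hus, hut⟩ := hst
  have hu : IsIdempotentElem (u⁻¹ * u) := InverseMonoid.isIdempotentElem_inv_mul u
  have hinv : u⁻¹ * (s * s⁻¹) = u⁻¹ := by
    simpa only [mul_inv_rev, _root_.inv_inv] using congrArg (·⁻¹) (mul_inv_mul_of_nle hus)
  have hcomm : Commute (u * u⁻¹) (s * s⁻¹) :=
    commute_of_isIdempotentElem (isIdempotentElem_mul_inv u) (isIdempotentElem_mul_inv s)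
  have hle : u⁻¹ * u * (s⁻¹ * t) = u⁻¹ * u := by
    calc u⁻¹ * u * (s⁻¹ * t) = u⁻¹ * (u * u⁻¹ * s) * (s⁻¹ * t) := by rw [← hus]
      _ = u⁻¹ * ((u * u⁻¹) * (s * s⁻¹)) * t := by simp only [mul_assoc]
      _ = u⁻¹ * (s * s⁻¹) * (u * u⁻¹ * t) := by rw [hcomm.eq]; simp only [mul_assoc]
      _ = u⁻¹ * u := by rw [hinv, ← hut]
  refine hS (u⁻¹ * u) (s⁻¹ * t) hu ?_
  rw [nle, inv_eq_of_isIdempotentElem hu, hu.eq, hle]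

theorem IsEUnitary.mul_eq_mul_of_sigmaRel (hS : IsEUnitary S) {s t e : S} (hst : sigmaRel s t)
    (hs : DefinedOn s e) (ht : DefinedOn t e) : e * s = e * t := by
  have hidem : IsIdempotentElem (s⁻¹ * t) := hS.isIdempotentElem_inv_mul hst
  have hinv : t⁻¹ * s = s⁻¹ * t := by
    simpa only [mul_inv_rev, _root_.inv_inv] using inv_eq_of_isIdempotentElem hidem
  calc e * s = e * t * (t⁻¹ * s) := (ht.mul_mul_inv_mul s).symm
    _ = e * s * (s⁻¹ * t) * (s⁻¹ * t) := by rw [hs.mul_mul_inv_mul, hinv]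
    _ = e * t := by rw [mul_assoc, hidem.eq, hs.mul_mul_inv_mul]

end InverseMonoid

section Words

/-- The value `[w]_M` of a word `w` when inverse letters are inverted by `M` itself. -/
abbrev wordValue {X M : Type*} [One M] [Mul M] [Inv M] (f : X → M) : Word X → M :=
  evalWord f (·⁻¹)

variable {X M : Type*}

section Monoid

variable [Monoid M] [Inv M] (f : X → M)

theorem wordValue_append (u v : Word X) :
    wordValue f (u ++ v) = wordValue f u * wordValue f v := by
  induction u with
  | nil => exact (one_mul _).symm
  | cons c u ih =>
    change _ * wordValue f (u ++ v) = _ * wordValue f u * wordValue f v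
    rw [ih, mul_assoc]

theorem wordValue_pos (x : X) : wordValue f [(x, true)] = f x :=
  mul_one _

theorem wordValue_neg (x : X) : wordValue f [(x, false)] = (f x)⁻¹ :=
  mul_one _

theorem wordValue_concat_pos (u : Word X) (x : X) :
    wordValue f (u ++ [(x, true)]) = wordValue f u * f x := by
  rw [wordValue_append, wordValue_pos]

theorem wordValue_concat_neg (u : Word X) (x : X) :
    wordValue f (u ++ [(x, false)]) = wordValue f u * (f x)⁻¹ := by
  rw [wordValue_append, wordValue_neg]

end Monoid

theorem wordValue_invRev [DivisionMonoid M] (f : X → M) (w : Word X) :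
    wordValue f (FreeGroup.invRev w) = (wordValue f w)⁻¹ := by
  induction w with
  | nil => exact inv_one.symm
  | cons c w ih =>
    rw [FreeGroup.invRev_cons, wordValue_append, ih]
    obtain ⟨x, _ | _⟩ := c <;> simp [FreeGroup.invRev, evalWord]

end Words

section Graphs

theorem gmulX_one (A : GraphX X G) : gmulX 1 A = A := by
  simp [gmulX]

theorem gmulX_gmulX (g h : G) (A : GraphX X G) : gmulX g (gmulX h A) = gmulX (g * h) A := by
  simp only [gmulX, Set.image_image, mul_assoc]

theorem gmulX_sup (g : G) (A B : GraphX X G) : gmulX g (A ⊔ B) = gmulX g A ⊔ gmulX g B :=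
  Prod.ext (Set.image_union ..) (Set.image_union ..)

theorem gmulX_gammaOneX (g : G) : gmulX g (gammaOneX : GraphX X G) = ({g}, ∅) := by
  simp [gmulX, gammaOneX]

theorem gmulX_gammaXX (ι : X → G) (a : G) (x : X) :
    gmulX a (gammaXX ι x) = ({a, a * ι x}, {(a, x)}) := by
  simp [gmulX, gammaXX, Set.image_pair]

theorem gmulX_gammaXX_le_iff {ι : X → G} {A : GraphX X G} (hA : IsSubgraphX ι A) {a : G} {x : X} :
    gmulX a (gammaXX ι x) ≤ A ↔ (a, x) ∈ A.2 := by
  rw [gmulX_gammaXX]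
  refine ⟨fun h => h.2 rfl, fun h => ⟨?_, Set.singleton_subset_iff.2 h⟩⟩
  obtain ⟨ha, hax⟩ := hA.2.2.2 _ h
  exact Set.pair_subset ha hax

/-- The subgraph `Γ(w)` of `Cay(G,X)` traced by the path that starts at `1` and has label `w`.  A
negative letter `x⁻¹` read at `a` traverses the positive edge `(a[x]⁻¹, x)` backwards. -/
def pathGraph (ι : X → G) : Word X → GraphX X G
  | [] => gammaOneX
  | (x, true) :: w => gammaXX ι x ⊔ gmulX (ι x) (pathGraph ι w)
  | (x, false) :: w => gmulX (ι x)⁻¹ (gammaXX ι x) ⊔ gmulX (ι x)⁻¹ (pathGraph ι w)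

theorem one_mem_pathGraph (ι : X → G) (w : Word X) : 1 ∈ (pathGraph ι w).1 := by
  obtain _ | ⟨⟨x, _ | _⟩, w⟩ := w
  · exact rfl
  · exact Or.inl (by simp [gmulX_gammaXX])
  · exact Or.inl (Or.inl rfl)

theorem pathGraph_append (ι : X → G) (u v : Word X) :
    pathGraph ι (u ++ v) = pathGraph ι u ⊔ gmulX (wordValue ι u) (pathGraph ι v) := by
  induction u with
  | nil =>
    have hone : gammaOneX ≤ pathGraph ι v :=
      ⟨Set.singleton_subset_iff.2 (one_mem_pathGraph ι v), Set.empty_subset _⟩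
    simp [pathGraph, evalWord, gmulX_one, hone]
  | cons c u ih =>
    obtain ⟨x, _ | _⟩ := c <;>
      simp [pathGraph, evalWord, ih, gmulX_sup, gmulX_gmulX, sup_assoc]

theorem wordValue_mem_pathGraph (ι : X → G) (w : Word X) :
    wordValue ι w ∈ (pathGraph ι w).1 := by
  have happ := pathGraph_append ι w []
  rw [List.append_nil, pathGraph, gmulX_gammaOneX] at happ
  rw [happ]
  exact Or.inr rfl

theorem pathGraph_pos (ι : X → G) (x : X) : pathGraph ι [(x, true)] = gammaXX ι x := by
  rw [pathGraph, pathGraph, gmulX_gammaOneX]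
  exact sup_eq_left.2 ⟨by simp [gammaXX], Set.empty_subset _⟩

theorem pathGraph_neg (ι : X → G) (x : X) :
    pathGraph ι [(x, false)] = gmulX (ι x)⁻¹ (gammaXX ι x) := by
  rw [pathGraph, pathGraph, gmulX_gammaOneX]
  exact sup_eq_left.2 ⟨by simp [gmulX_gammaXX], Set.empty_subset _⟩

theorem pathGraph_concat_pos (ι : X → G) (u : Word X) (x : X) :
    pathGraph ι (u ++ [(x, true)]) = pathGraph ι u ⊔ gmulX (wordValue ι u) (gammaXX ι x) := by
  rw [pathGraph_append, pathGraph_pos]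

theorem pathGraph_concat_neg (ι : X → G) (u : Word X) (x : X) :
    pathGraph ι (u ++ [(x, false)]) =
      pathGraph ι u ⊔ gmulX (wordValue ι u * (ι x)⁻¹) (gammaXX ι x) := by
  rw [pathGraph_append, pathGraph_neg, gmulX_gmulX]

theorem pathGraph_invRev (ι : X → G) (w : Word X) :
    pathGraph ι (FreeGroup.invRev w) = gmulX (wordValue ι w)⁻¹ (pathGraph ι w) := by
  induction w with
  | nil => simp [pathGraph, evalWord, gmulX_one]
  | cons c w ih =>
    rw [FreeGroup.invRev_cons, pathGraph_append, ih, wordValue_invRev]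
    obtain ⟨x, _ | _⟩ := c <;>
      simp [FreeGroup.invRev, pathGraph_pos, pathGraph_neg, pathGraph, evalWord, gmulX_sup,
        gmulX_gmulX, sup_comm]

theorem pathGraph_append_invRev_append (ι : X → G) (u v : Word X) :
    pathGraph ι (u ++ FreeGroup.invRev u ++ v) = pathGraph ι u ⊔ pathGraph ι v := by
  rw [pathGraph_append, pathGraph_append, pathGraph_invRev, wordValue_append, wordValue_invRev,
    gmulX_gmulX, mul_inv_cancel, gmulX_one, gmulX_one, sup_idem]

theorem supClosed_range_pathGraph (ι : X → G) : SupClosed (Set.range (pathGraph ι)) := by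
  rintro _ ⟨u, rfl⟩ _ ⟨v, rfl⟩
  exact ⟨_, pathGraph_append_invRev_append ι u v⟩

theorem exists_pathGraph_le {ι : X → G} {A : GraphX X G} (hA : A ∈ XXc ι) {v : G}
    (hv : v ∈ A.1) : ∃ w, pathGraph ι w ≤ A ∧ wordValue ι w = v := by
  obtain ⟨hsub, hconn⟩ := hA
  let reached : G → Prop := fun a => ∃ w, pathGraph ι w ≤ A ∧ wordValue ι w = a
  have hedge : ∀ a b, edgeRelX ι A a b → reached a = reached b := by
    rintro a _ ⟨x, hax, rfl⟩
    refine propext ⟨?_, ?_⟩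
    · rintro ⟨w, hw, rfl⟩
      exact ⟨w ++ [(x, true)],
        pathGraph_concat_pos ι w x ▸ sup_le hw ((gmulX_gammaXX_le_iff hsub).2 hax),
        wordValue_concat_pos ..⟩
    · rintro ⟨w, hw, hwa⟩
      have ha : wordValue ι w * (ι x)⁻¹ = a := by rw [hwa, mul_inv_cancel_right]
      exact ⟨w ++ [(x, false)],
        pathGraph_concat_neg ι w x ▸ sup_le hw (ha ▸ (gmulX_gammaXX_le_iff hsub).2 hax),
        (wordValue_concat_neg ..).trans ha⟩
  have hker : Relation.EqvGen.setoid (edgeRelX ι A) ≤ Setoid.ker reached :=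
    Setoid.eqvGen_le hedge
  have hone : reached 1 :=
    ⟨[], ⟨Set.singleton_subset_iff.2 hsub.2.2.1, Set.empty_subset _⟩, rfl⟩
  have hreached : reached 1 = reached v := hker (hconn v hv)
  exact hreached.mp hone

theorem mem_range_pathGraph {ι : X → G} {A : GraphX X G} (hA : A ∈ XXc ι) :
    A ∈ Set.range (pathGraph ι) := by
  have hsub : IsSubgraphX ι A := hA.1
  let traced : Set (GraphX X G) := Set.Iic A ∩ Set.range (pathGraph ι)
  have hfin : traced.Finite := by
    refine Set.Finite.inter_of_left ?_ _
    rw [Set.Iic_prod_eq]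
    exact hsub.1.finite_subsets.prod hsub.2.1.finite_subsets
  have hne : traced.Nonempty :=
    ⟨gammaOneX, ⟨Set.singleton_subset_iff.2 hsub.2.2.1, Set.empty_subset _⟩, [], rfl⟩
  have hA_le : A ≤ sSup traced := by
    constructor
    · intro v hv
      obtain ⟨w, hw, rfl⟩ := exists_pathGraph_le hA hv
      have hpath : pathGraph ι w ∈ traced := ⟨hw, w, rfl⟩
      exact (le_sSup hpath).1 (wordValue_mem_pathGraph ι w)
    · rintro ⟨a, x⟩ hax
      obtain ⟨w, hw, rfl⟩ := exists_pathGraph_le hA (hsub.2.2.2 _ hax).1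
      have hstep : pathGraph ι (w ++ [(x, true)]) ∈ traced :=
        ⟨pathGraph_concat_pos ι w x ▸ sup_le hw ((gmulX_gammaXX_le_iff hsub).2 hax), _, rfl⟩
      refine (le_sSup hstep).2 ?_
      rw [pathGraph_concat_pos, gmulX_gammaXX]
      exact Or.inr rfl
  have heq : sSup traced = A := le_antisymm (sSup_le fun _ h => h.1) hA_le
  exact heq ▸ (supClosed_range_pathGraph ι).sSup_mem_of_nonempty hfin hne Set.inter_subset_right

/-- The value of a word in `M(G,X)` under `x ↦ (Γ_x, [x])`. -/
def expansionValue (ι : X → G) (w : Word X) : GraphX X G × G := (pathGraph ι w, wordValue ι w)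

theorem expansionValue_append (ι : X → G) (u v : Word X) :
    expansionValue ι (u ++ v) = mulMX (expansionValue ι u) (expansionValue ι v) :=
  Prod.ext (pathGraph_append ι u v) (wordValue_append ..)

theorem expansionValue_invRev (ι : X → G) (w : Word X) :
    expansionValue ι (FreeGroup.invRev w) = invMX (expansionValue ι w) :=
  Prod.ext (pathGraph_invRev ι w) (wordValue_invRev ι w)

theorem expansionValue_pos (ι : X → G) (x : X) :
    expansionValue ι [(x, true)] = (gammaXX ι x, ι x) :=
  Prod.ext (pathGraph_pos ι x) (mul_one _)

theorem exists_expansionValue_eq {ι : X → G} {p : GraphX X G × G} (hp : p ∈ MsetX ι) :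
    ∃ w, expansionValue ι w = p := by
  obtain ⟨A, g⟩ := p
  obtain ⟨hA, hg⟩ := hp
  obtain ⟨u, rfl⟩ := mem_range_pathGraph hA
  obtain ⟨v, hv, rfl⟩ := exists_pathGraph_le hA hg
  refine ⟨u ++ FreeGroup.invRev u ++ v, Prod.ext ?_ ?_⟩
  · exact (pathGraph_append_invRev_append ι u v).trans (sup_eq_left.2 hv)
  · simp [expansionValue, wordValue_append, wordValue_invRev]

end Graphs

section WellDefined

open scoped InverseMonoid
open InverseMonoid (DefinedOn IsEUnitary definedOn_one definedOn_congr definedOn_mul_inv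
  definedOn_mul_mul_inv isIdempotentElem_mul_inv commute_of_isIdempotentElem)

variable {S : Type*} [InverseMonoid S] {ι : X → G} {ιS : X → S} {e : S}

/-- Words with equal values in `G` have `σ`-related values in `S`. -/
def SigmaCompatible (ι : X → G) (ιS : X → S) : Prop :=
  ∀ u v : Word X, wordValue ι u = wordValue ι v → sigmaRel (wordValue ιS u) (wordValue ιS v)

/-- The edges `(a, x)` of `Cay(G,X)` such that some word `v` with value `a` in `G` has `[vx]_S`
defined on `e`. -/
def supportedEdges (ι : X → G) (ιS : X → S) (e : S) : Set (G × X) :=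
  {d | ∃ v, wordValue ι v = d.1 ∧ DefinedOn (wordValue ιS v * ιS d.2) e}

theorem SigmaCompatible.mul_wordValue_congr (hι : SigmaCompatible ι ιS) (hS : IsEUnitary S)
    {u v : Word X} (huv : wordValue ι u = wordValue ι v) (hu : DefinedOn (wordValue ιS u) e)
    (hv : DefinedOn (wordValue ιS v) e) : e * wordValue ιS u = e * wordValue ιS v :=
  hS.mul_eq_mul_of_sigmaRel (hι u v huv) hu hv

theorem SigmaCompatible.mem_supportedEdges_iff (hι : SigmaCompatible ι ιS) (hS : IsEUnitary S)
    (he : IsIdempotentElem e) {u : Word X} (hu : DefinedOn (wordValue ιS u) e) (x : X) :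
    (wordValue ι u, x) ∈ supportedEdges ι ιS e ↔ DefinedOn (wordValue ιS u * ιS x) e := by
  refine ⟨?_, fun h => ⟨u, rfl, h⟩⟩
  rintro ⟨v, hvu, hvx⟩
  have huv := hι.mul_wordValue_congr hS hvu.symm hu hvx.of_mul
  exact (definedOn_congr he (by rw [← mul_assoc, huv, mul_assoc])).2 hvx

theorem SigmaCompatible.mem_supportedEdges_iff_inv (hι : SigmaCompatible ι ιS)
    (hS : IsEUnitary S) (he : IsIdempotentElem e) {u : Word X}
    (hu : DefinedOn (wordValue ιS u) e) (x : X) :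
    (wordValue ι u * (ι x)⁻¹, x) ∈ supportedEdges ι ιS e ↔
      DefinedOn (wordValue ιS u * (ιS x)⁻¹) e := by
  constructor
  · rintro ⟨v, hv, hvx⟩
    have hvalue : wordValue ι u = wordValue ι (v ++ [(x, true)]) := by
      rw [wordValue_concat_pos, hv, inv_mul_cancel_right]
    have huv := hι.mul_wordValue_congr hS hvalue hu ((wordValue_concat_pos ιS v x).symm ▸ hvx)
    rw [wordValue_concat_pos] at huv
    refine (definedOn_congr he ?_).2 (definedOn_mul_mul_inv.2 hvx)
    rw [← mul_assoc, huv, mul_assoc]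
  · intro h
    refine ⟨u ++ [(x, false)], wordValue_concat_neg .., ?_⟩
    rw [wordValue_concat_neg]
    simpa only [inv_inv] using definedOn_mul_mul_inv.2 h

theorem SigmaCompatible.pathGraph_subset_supportedEdges_iff (hι : SigmaCompatible ι ιS)
    (hS : IsEUnitary S) (he : IsIdempotentElem e) (u : Word X) :
    (pathGraph ι u).2 ⊆ supportedEdges ι ιS e ↔ DefinedOn (wordValue ιS u) e := by
  induction u using List.reverseRecOn with
  | nil => exact iff_of_true (Set.empty_subset _) (definedOn_one e)
  | append_singleton u c ih =>
    have hstep {d : G × X} {s : S}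
        (hd : DefinedOn (wordValue ιS u) e →
          (d ∈ supportedEdges ι ιS e ↔ DefinedOn (wordValue ιS u * s) e)) :
        (pathGraph ι u).2 ∪ {d} ⊆ supportedEdges ι ιS e ↔ DefinedOn (wordValue ιS u * s) e := by
      rw [Set.union_subset_iff, Set.singleton_subset_iff, ih]
      exact ⟨fun h => (hd h.1).1 h.2, fun h => ⟨h.of_mul, (hd h.of_mul).2 h⟩⟩
    obtain ⟨x, _ | _⟩ := c
    · rw [pathGraph_concat_neg, gmulX_gammaXX, wordValue_concat_neg]
      exact hstep fun hu => hι.mem_supportedEdges_iff_inv hS he hu x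
    · rw [pathGraph_concat_pos, gmulX_gammaXX, wordValue_concat_pos]
      exact hstep fun hu => hι.mem_supportedEdges_iff hS he hu x

theorem SigmaCompatible.definedOn_of_pathGraph_subset (hι : SigmaCompatible ι ιS)
    (hS : IsEUnitary S) {u v : Word X} (hsub : (pathGraph ι u).2 ⊆ (pathGraph ι v).2) :
    DefinedOn (wordValue ιS u) (wordValue ιS v * (wordValue ιS v)⁻¹) := by
  have he := isIdempotentElem_mul_inv (wordValue ιS v)
  rw [← hι.pathGraph_subset_supportedEdges_iff hS he]
  exact hsub.trans ((hι.pathGraph_subset_supportedEdges_iff hS he v).2 (definedOn_mul_inv _))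

theorem SigmaCompatible.wordValue_eq_of_pathGraph_eq (hι : SigmaCompatible ι ιS)
    (hS : IsEUnitary S) {u v : Word X} (hgraph : (pathGraph ι u).2 = (pathGraph ι v).2)
    (hvalue : wordValue ι u = wordValue ι v) : wordValue ιS u = wordValue ιS v := by
  set s := wordValue ιS u
  set t := wordValue ιS v
  have hts : DefinedOn t (s * s⁻¹) := hι.definedOn_of_pathGraph_subset hS hgraph.ge
  have hst : DefinedOn s (t * t⁻¹) := hι.definedOn_of_pathGraph_subset hS hgraph.le
  have hcomm : Commute (s * s⁻¹) (t * t⁻¹) :=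
    commute_of_isIdempotentElem (isIdempotentElem_mul_inv s) (isIdempotentElem_mul_inv t)
  have hdom : s * s⁻¹ = t * t⁻¹ := hts.symm.trans (hcomm.eq.trans hst)
  calc s = s * s⁻¹ * s := (InverseMonoid.mul_inv_mul s).symm
    _ = s * s⁻¹ * t := hι.mul_wordValue_congr hS hvalue (definedOn_mul_inv s) hts
    _ = t := by rw [hdom, InverseMonoid.mul_inv_mul]

theorem universal_property_MGX_general (hS : IsEUnitary S) (hι : SigmaCompatible ι ιS) :
    ∃ φ : GraphX X G × G → S,
      φ (gammaOneX, 1) = 1 ∧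
      (∀ p q, p ∈ MsetX ι → q ∈ MsetX ι → φ (mulMX p q) = φ p * φ q) ∧
      (∀ p, p ∈ MsetX ι → φ (invMX p) = (φ p)⁻¹) ∧
      (∀ x, φ (gammaXX ι x, ι x) = ιS x) ∧
      (∀ p, p ∈ MsetX ι → ∀ w, wordValue ι w = p.2 → sigmaRel (φ p) (wordValue ιS w)) := by
  have hwd : (wordValue ιS).FactorsThrough (expansionValue ι) := fun u v huv =>
    hι.wordValue_eq_of_pathGraph_eq hS (congrArg (·.1.2) huv) (congrArg Prod.snd huv)
  let φ := Function.extend (expansionValue ι) (wordValue ιS) 1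
  have hφ (w : Word X) : φ (expansionValue ι w) = wordValue ιS w := hwd.extend_apply 1 w
  refine ⟨φ, hφ [], fun p q hp hq => ?_, fun p hp => ?_, fun x => ?_, fun p hp w hw => ?_⟩
  · obtain ⟨u, rfl⟩ := exists_expansionValue_eq hp
    obtain ⟨v, rfl⟩ := exists_expansionValue_eq hq
    rw [← expansionValue_append, hφ, hφ, hφ, wordValue_append]
  · obtain ⟨u, rfl⟩ := exists_expansionValue_eq hp
    rw [← expansionValue_invRev, hφ, hφ, wordValue_invRev]
  · rw [← expansionValue_pos, hφ]
    exact mul_one _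
  · obtain ⟨u, rfl⟩ := exists_expansionValue_eq hp
    rw [hφ]
    exact hι u w hw.symm

end WellDefined

/-- universal property of `M(G,X)`.  Let `G` be an
`X`-generated group and `S` an `E`-unitary inverse monoid equipped with
`ι_S : X → S` generating `S` under multiplication and inversion, such that
words over `X ∪ X⁻¹` with equal values in `G` have `σ`-related values in `S`.
Then there is a monoid homomorphism `φ : M(G,X) → S` preserving inversion,
sending `(Γ_x, [x])` to `ι_S x`, and such that `φ(A,g)` is `σ`-related to the
value in `S` of any word over `X ∪ X⁻¹` whose value in `G` is `g`. -/
theorem universal_property_MGX {X G S : Type*} [Nonempty X] [Group G]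
    [InverseMonoid S] (ι : X → G)
    (hgen : Subgroup.closure (Set.range ι) = ⊤)
    -- `S` is `E`-unitary:
    (hEunit : ∀ e s : S, e * e = e → nle e s → s * s = s)
    (ιS : X → S)
    -- `S` is generated by `ι_S(X)` under multiplication and inversion:
    (hSgen : ∀ P : Set S, (1 : S) ∈ P → (∀ x : X, ιS x ∈ P) →
      (∀ a b : S, a ∈ P → b ∈ P → a * b ∈ P) →
      (∀ a : S, a ∈ P → a⁻¹ ∈ P) → ∀ s : S, s ∈ P)
    -- words with equal values in `G` have `σ`-related values in `S`:
    (hcompat : ∀ u v : Word X,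
      evalWord ι (fun a => a⁻¹) u = evalWord ι (fun a => a⁻¹) v →
      sigmaRel (evalWord ιS (fun s => s⁻¹) u) (evalWord ιS (fun s => s⁻¹) v)) :
    ∃ φ : GraphX X G × G → S,
      -- `φ` is a monoid homomorphism on `M(G,X)`
      φ ((gammaOneX, 1) : GraphX X G × G) = 1 ∧
      (∀ p q : GraphX X G × G, p ∈ MsetX ι → q ∈ MsetX ι →
        φ (mulMX p q) = φ p * φ q) ∧
      -- `φ` preserves inversion
      (∀ p : GraphX X G × G, p ∈ MsetX ι → φ (invMX p) = (φ p)⁻¹) ∧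
      -- `φ` sends the generator `(Γ_x, [x])` to `ι_S x`
      (∀ x : X, φ ((gammaXX ι x, ι x) : GraphX X G × G) = ιS x) ∧
      -- `φ(A,g)` is `σ`-related to `[w]_S` whenever `[w]_G = g`
      (∀ p : GraphX X G × G, p ∈ MsetX ι → ∀ w : Word X,
        evalWord ι (fun a => a⁻¹) w = p.2 →
        sigmaRel (φ p) (evalWord ιS (fun s => s⁻¹) w)) :=
  universal_property_MGX_general hEunit hcompat

end FInvPaper
end

section
/- For each g ∈ G, the set D_g := {Γ ∈ 𝒳_Y : g ∈ V(Γ)} is an order ideal of the meet-semilattice (𝒳_Y, reverse inclusion), and the maps φ_g : D_{g⁻¹} → D_g, Γ ↦ gΓ, form a partial action of G on 𝒳_Y by order isomorphisms between order ideals: each φ_g is an order isomorphism from D_{g⁻¹} onto D_g, D_1 = 𝒳_Y with φ_1 = id, φ_{g⁻¹} = (φ_g)⁻¹, and whenever Γ ∈ D_{h⁻¹} and φ_h(Γ) ∈ D_{g⁻¹}, also Γ ∈ D_{(gh)⁻¹} and φ_{gh}(Γ) = φ_g(φ_h(Γ)). Moreover, for all (A,g), (B,h) ∈ M(G,Y)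 one has φ_g(φ_{g⁻¹}(A) ∪ B) = A ∪ gB, so the partial action product 𝒳_Y ⋊ G coincides with M(G,Y). -/
namespace FInvPaper

/-- The domain `D_g = {Γ ∈ 𝒳_Y : g ∈ V(Γ)}` of the partial translation by `g`. -/
def Dset {X G : Type*} [Group G] (ι : X → G) (g : G) : Set (Graph X G) :=
  {Γ | Γ ∈ XY ι ∧ g ∈ Γ.1}

/-!
Translation is an action of `G` on all graphs, by automorphisms of the inclusion order. If `Γ` lies
in `𝒳_Y`, then `gΓ` is again finite and connected, so it lies in `𝒳_Y` exactly when it contains the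
origin, that is, when `g⁻¹ ∈ V(Γ)`. Hence `D_g = 𝒳_Y ∩ g𝒳_Y`: the partial action is the restriction
to `𝒳_Y` of a global action, and its axioms are formal consequences of this. `D_g` is nonempty
because the edge labelled `ḡ` at the origin ends at `g`.
-/

section

variable {X G : Type*} [Group G]

@[simp]
theorem gmul_one (Γ : Graph X G) : gmul 1 Γ = Γ := by
  simp [gmul]

theorem gmul_mul (g h : G) (Γ : Graph X G) : gmul (g * h) Γ = gmul g (gmul h Γ) := by
  simp only [gmul, Set.image_image, mul_assoc]

@[simp]
theorem gmul_inv_gmul (g : G) (Γ : Graph X G) : gmul g⁻¹ (gmul g Γ) = Γ := by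
  rw [← gmul_mul, inv_mul_cancel, gmul_one]

@[simp]
theorem gmul_gmul_inv (g : G) (Γ : Graph X G) : gmul g (gmul g⁻¹ Γ) = Γ := by
  rw [← gmul_mul, mul_inv_cancel, gmul_one]

theorem gsub_gmul_gmul_iff (g : G) (Γ Δ : Graph X G) :
    gsub (gmul g Γ) (gmul g Δ) ↔ gsub Γ Δ :=
  and_congr (Set.image_subset_image_iff (mul_right_injective g))
    (Set.image_subset_image_iff ((mul_right_injective g).prodMap Function.injective_id))

theorem gmul_gunion (g : G) (Γ Δ : Graph X G) :
    gmul g (gunion Γ Δ) = gunion (gmul g Γ) (gmul g Δ) :=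
  Prod.ext (Set.image_union ..) (Set.image_union ..)

theorem one_mem_gmul_iff {g : G} {Γ : Graph X G} : 1 ∈ (gmul g Γ).1 ↔ g⁻¹ ∈ Γ.1 := by
  simp [gmul]

theorem IsSubgraph.gmul {ι : X → G} {g : G} {Γ : Graph X G} (hΓ : IsSubgraph ι Γ)
    (hg : g⁻¹ ∈ Γ.1) : IsSubgraph ι (gmul g Γ) := by
  obtain ⟨hV, hE, -, hends⟩ := hΓ
  refine ⟨hV.image _, hE.image _, one_mem_gmul_iff.2 hg, ?_⟩
  rintro _ ⟨e, he, rfl⟩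
  exact ⟨⟨_, (hends e he).1, rfl⟩, ⟨_, (hends e he).2, (mul_assoc _ _ _).symm⟩⟩

theorem edgeRel.gmul {ι : X → G} {Γ : Graph X G} {a b : G} (g : G) (h : edgeRel ι Γ a b) :
    edgeRel ι (gmul g Γ) (g * a) (g * b) := by
  obtain ⟨y, hy, rfl⟩ := h
  exact ⟨y, ⟨(a, y), hy, rfl⟩, (mul_assoc _ _ _).symm⟩

theorem eqvGen_edgeRel_gmul {ι : X → G} {Γ : Graph X G} {a b : G} (g : G)
    (h : Relation.EqvGen (edgeRel ι Γ) a b) :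
    Relation.EqvGen (edgeRel ι (gmul g Γ)) (g * a) (g * b) := by
  induction h with
  | rel a b hab => exact .rel _ _ (hab.gmul g)
  | refl a => exact .refl _
  | symm a b _ ih => exact .symm _ _ ih
  | trans a b c _ _ ihab ihbc => exact .trans _ _ _ ihab ihbc

theorem IsConn.gmul {ι : X → G} {g : G} {Γ : Graph X G} (hΓ : IsConn ι Γ) (hg : g⁻¹ ∈ Γ.1) :
    IsConn ι (gmul g Γ) := by
  rintro _ ⟨v, hv, rfl⟩
  have path : Relation.EqvGen (edgeRel ι Γ) g⁻¹ v := .trans _ _ _ (.symm _ _ (hΓ _ hg)) (hΓ v hv)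
  simpa only [mul_inv_cancel] using eqvGen_edgeRel_gmul g path

theorem gmul_mem_XY_iff {ι : X → G} {g : G} {Γ : Graph X G} (hΓ : Γ ∈ XY ι) :
    gmul g Γ ∈ XY ι ↔ g⁻¹ ∈ Γ.1 :=
  ⟨fun h ↦ one_mem_gmul_iff.1 h.1.2.2.1, fun hg ↦ ⟨hΓ.1.gmul hg, hΓ.2.gmul hg⟩⟩

theorem mem_Dset_inv_iff {ι : X → G} {g : G} {Γ : Graph X G} :
    Γ ∈ Dset ι g⁻¹ ↔ Γ ∈ XY ι ∧ gmul g Γ ∈ XY ι :=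
  and_congr_right fun hΓ ↦ (gmul_mem_XY_iff hΓ).symm

theorem mem_Dset_iff {ι : X → G} {g : G} {Γ : Graph X G} :
    Γ ∈ Dset ι g ↔ Γ ∈ XY ι ∧ gmul g⁻¹ Γ ∈ XY ι := by
  rw [← mem_Dset_inv_iff, inv_inv]

theorem Dset_one (ι : X → G) : Dset ι 1 = XY ι := by
  ext Γ
  simp [mem_Dset_iff]

theorem bijOn_gmul (ι : X → G) (g : G) : Set.BijOn (gmul g) (Dset ι g⁻¹) (Dset ι g) := by
  have mapsTo (h : G) : Set.MapsTo (gmul h) (Dset ι h⁻¹) (Dset ι h) := fun Γ hΓ ↦ by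
    rw [mem_Dset_inv_iff] at hΓ
    rwa [mem_Dset_iff, gmul_inv_gmul, and_comm]
  have mapsTo_inv : Set.MapsTo (gmul g⁻¹) (Dset ι g) (Dset ι g⁻¹) := by
    simpa only [inv_inv] using mapsTo g⁻¹
  exact Set.InvOn.bijOn ⟨fun Γ _ ↦ gmul_inv_gmul g Γ, fun Γ _ ↦ gmul_gmul_inv g Γ⟩
    (mapsTo g) mapsTo_inv

theorem mem_Dset_mul_inv {ι : X → G} {g h : G} {Γ : Graph X G} (hΓ : Γ ∈ XY ι)
    (hhΓ : gmul h Γ ∈ Dset ι g⁻¹) : Γ ∈ Dset ι (g * h)⁻¹ := by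
  rw [mem_Dset_inv_iff, gmul_mul]
  exact ⟨hΓ, (mem_Dset_inv_iff.1 hhΓ).2⟩

theorem gammaBar_mem_Dset (ι : X → G) (g : G) : gammaBar g ∈ Dset ι g := by
  have subgraph : IsSubgraph ι (gammaBar g) := by simp [IsSubgraph, gammaBar, iotaY]
  have conn : IsConn ι (gammaBar g) := by
    rintro v (rfl | rfl)
    · exact .refl _
    · exact .rel _ _ ⟨Sum.inr v, rfl, (one_mul v).symm⟩
  exact ⟨⟨subgraph, conn⟩, .inr rfl⟩

theorem mem_Dset_of_gsub {ι : X → G} {g : G} {Γ Δ : Graph X G} (hΓ : Γ ∈ XY ι)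
    (hΔ : Δ ∈ Dset ι g) (h : gsub Δ Γ) : Γ ∈ Dset ι g :=
  ⟨hΓ, h.1 hΔ.2⟩

theorem gmul_gunion_gmul_inv (g : G) (A B : Graph X G) :
    gmul g (gunion (gmul g⁻¹ A) B) = gunion A (gmul g B) := by
  rw [gmul_gunion, gmul_gmul_inv]

theorem partialAction_XY_general (ι : X → G) :
    (∀ g : G, (Dset ι g).Nonempty ∧
      ∀ Γ ∈ XY ι, ∀ Δ ∈ Dset ι g, gsub Δ Γ → Γ ∈ Dset ι g) ∧
    (∀ g : G, Set.BijOn (gmul g) (Dset ι g⁻¹) (Dset ι g)) ∧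
    (∀ (g : G) (Γ Δ : Graph X G), gsub (gmul g Γ) (gmul g Δ) ↔ gsub Γ Δ) ∧
    Dset ι 1 = XY ι ∧
    (∀ Γ : Graph X G, gmul 1 Γ = Γ) ∧
    (∀ (g : G) (Γ : Graph X G), gmul g⁻¹ (gmul g Γ) = Γ) ∧
    (∀ g h : G, ∀ Γ ∈ XY ι, gmul h Γ ∈ Dset ι g⁻¹ → Γ ∈ Dset ι (g * h)⁻¹) ∧
    (∀ (g h : G) (Γ : Graph X G), gmul (g * h) Γ = gmul g (gmul h Γ)) ∧
    (∀ (g : G) (A B : Graph X G),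
      gmul g (gunion (gmul g⁻¹ A) B) = gunion A (gmul g B)) :=
  ⟨fun g ↦ ⟨⟨_, gammaBar_mem_Dset ι g⟩, fun _ hΓ _ hΔ ↦ mem_Dset_of_gsub hΓ hΔ⟩,
    bijOn_gmul ι, gsub_gmul_gmul_iff, Dset_one ι, gmul_one, gmul_inv_gmul,
    fun _ _ _ ↦ mem_Dset_mul_inv, gmul_mul, gmul_gunion_gmul_inv⟩

end

/-- For each `g ∈ G`, the set `D_g = {Γ ∈ 𝒳_Y : g ∈ V(Γ)}`
is an order ideal of `(𝒳_Y, ⊇)` (nonempty, and downward closed for the reverse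
inclusion order, i.e. closed under passing to larger subgraphs), and the maps
`φ_g : D_{g⁻¹} → D_g`, `Γ ↦ gΓ`, form a partial action of `G` on `𝒳_Y` by order
isomorphisms between order ideals; moreover
`φ_g(φ_{g⁻¹}(A) ∪ B) = A ∪ gB` for all `(A,g), (B,h) ∈ M(G,Y)`, so the partial
action product `𝒳_Y ⋊ G` coincides with `M(G,Y)`. -/
theorem partialAction_XY {X G : Type*} [Nonempty X] [Group G] (ι : X → G)
    (hgen : Subgroup.closure (Set.range ι) = ⊤) :
    -- each `D g` is an order ideal for reverse inclusion
    (∀ g : G, (Dset ι g).Nonempty ∧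
      ∀ Γ ∈ XY ι, ∀ Δ ∈ Dset ι g, gsub Δ Γ → Γ ∈ Dset ι g) ∧
    -- `φ_g` maps `D g⁻¹` into `D g`
    (∀ g : G, ∀ Γ ∈ Dset ι g⁻¹, gmul g Γ ∈ Dset ι g) ∧
    -- `φ_g` is an order embedding of `D g⁻¹`
    (∀ g : G, ∀ Γ ∈ Dset ι g⁻¹, ∀ Δ ∈ Dset ι g⁻¹,
      (gsub (gmul g Γ) (gmul g Δ) ↔ gsub Γ Δ)) ∧
    -- `φ_g` maps `D g⁻¹` onto `D g`
    (∀ g : G, ∀ Δ ∈ Dset ι g, ∃ Γ ∈ Dset ι g⁻¹, gmul g Γ = Δ) ∧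
    -- `D 1 = 𝒳_Y` and `φ_1 = id`
    (Dset ι (1 : G) = XY ι) ∧
    (∀ Γ : Graph X G, gmul (1 : G) Γ = Γ) ∧
    -- `φ_{g⁻¹} = (φ_g)⁻¹`
    (∀ g : G, ∀ Γ ∈ Dset ι g⁻¹, gmul g⁻¹ (gmul g Γ) = Γ) ∧
    -- compatibility with composition
    (∀ g h : G, ∀ Γ ∈ Dset ι h⁻¹, gmul h Γ ∈ Dset ι g⁻¹ →
      Γ ∈ Dset ι (g * h)⁻¹ ∧ gmul (g * h) Γ = gmul g (gmul h Γ)) ∧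
    -- the partial action product coincides with `M(G,Y)`
    (∀ p q : Elt X G, p ∈ Mset ι → q ∈ Mset ι →
      gmul p.2 (gunion (gmul p.2⁻¹ p.1) q.1) = gunion p.1 (gmul p.2 q.1)) := by
  obtain ⟨ideal, bij, sub_iff, D_one, one, inv, D_mul, mul, prod⟩ := partialAction_XY_general ι
  exact ⟨ideal, fun g ↦ (bij g).mapsTo, fun g Γ _ Δ _ ↦ sub_iff g Γ Δ, fun g ↦ (bij g).surjOn,
    D_one, one, fun g Γ _ ↦ inv g Γ, fun g h Γ hΓ hhΓ ↦ ⟨D_mul g h Γ hΓ.1 hhΓ, mul g h Γ⟩,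
    fun p q _ _ ↦ prod p.2 p.1 q.1⟩

end FInvPaper
end
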